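/- Let P(z) = ∑_{j=0}^{n} a_j z^j be a complex polynomial of degree n ≥ 2 all of whose zeros lie in |z| ≤ 1, let m₁ = min_{|z|=1}|P(z)|, and let 0 ≤ l < 1. Then max_{|z|=1}|P′(z)| ≥ (n/2)·(max_{|z|=1}|P(z)| + l·m₁) + (1/2)·((|a_n| − l·m₁ − |a_0|)/(|a_n| − l·m₁ + |a_0|))·(max_{|z|=1}|P(z)| − l·m₁). -/

import Mathlib

open Polynomial Metric

/-- The maximum of `|P(z)|` over the circle `|z| = r`. -/
noncomputable def maxMod (P : Polynomial ℂ) (r : ℝ) : ℝ :=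
  ⨆ z : sphere (0 : ℂ) r, ‖P.eval (z : ℂ)‖

/-- The minimum of `|P(z)|` over the circle `|z| = r`. -/
noncomputable def minMod (P : Polynomial ℂ) (r : ℝ) : ℝ :=
  ⨅ z : sphere (0 : ℂ) r, ‖P.eval (z : ℂ)‖

/-! For a zero `w` with `|w| ≤ 1` and `|z| = 1`, the number `z / (z - w)` has real part at least
`1 / (1 + |w|)`. Summing over the zeros bounds `Re (z P'(z) / P(z))` from below, and subadditivity
of `r ↦ (1 - r) / (1 + r)` under products turns this into a bound in terms of the product of the
`|w|`, which is `|a₀ / aₙ|` (Dubinin's inequality, the case `m₁ = 0`).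

The general case comes from applying this to `P(z) + c zⁿ` with `|c| < m`, where `m = l m₁`. By the
minimum modulus principle for the reversed polynomial, `|P(z)| ≥ m |z|ⁿ` outside the disc, so the
perturbed zeros stay in the disc. The argument of `c` is chosen so that `c` reduces `|P'(z)|` by
exactly `n |c|`, while it reduces `|P(z)|` by at most `|c|`; then `|c|` tends to `m`. -/

/-- The normalized difference `(a - b) / (a + b)` of two nonnegative numbers, through which the
moduli of the leading and the constant coefficient enter Dubinin's inequality. Division by zero
gives it the value `0` at `a = b = 0`. -/
noncomputable def normalizedDiff (a b : ℝ) : ℝ :=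
  (a - b) / (a + b)

section NormalizedDiff

variable {a a' b r s : ℝ}

lemma normalizedDiff_mul_right (ha : a ≠ 0) (r : ℝ) :
    normalizedDiff a (a * r) = normalizedDiff 1 r := by
  unfold normalizedDiff
  rw [← mul_div_mul_left (1 - r) (1 + r) ha]
  ring

lemma neg_one_le_normalizedDiff (ha : 0 ≤ a) (hb : 0 ≤ b) : -1 ≤ normalizedDiff a b := by
  unfold normalizedDiff
  rcases (add_nonneg ha hb).eq_or_lt with hab | hab
  · simp [← hab]
  · rw [le_div_iff₀ hab]
    linarith

lemma normalizedDiff_le_normalizedDiff_left (ha : 0 ≤ a) (haa' : a ≤ a') (hb : 0 ≤ b) :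
    normalizedDiff a b ≤ normalizedDiff a' b := by
  unfold normalizedDiff
  rcases hb.eq_or_lt with rfl | hb
  · simp only [sub_zero, add_zero]
    rcases ha.eq_or_lt with rfl | ha
    · simpa using div_nonneg haa' haa'
    · rw [div_self ha.ne', div_self (ha.trans_le haa').ne']
  · rw [div_le_div_iff₀ (by linarith) (by linarith)]
    nlinarith

lemma normalizedDiff_one_mul_le (hr : r ∈ Set.Icc 0 1) (hs : s ∈ Set.Icc 0 1) :
    normalizedDiff 1 (r * s) ≤ normalizedDiff 1 r + normalizedDiff 1 s := by
  obtain ⟨hr0, hr1⟩ := hr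
  obtain ⟨hs0, hs1⟩ := hs
  have sum_eq : normalizedDiff 1 r + normalizedDiff 1 s
      = 2 * (1 - r * s) / ((1 + r) * (1 + s)) := by
    unfold normalizedDiff
    field_simp
    ring
  have hrs : 0 ≤ 1 - r * s := sub_nonneg.2 (mul_le_one₀ hr1 hs0 hs1)
  rw [sum_eq, normalizedDiff, div_le_div_iff₀ (by positivity) (by positivity)]
  nlinarith [mul_nonneg hrs (mul_nonneg (sub_nonneg.2 hr1) (sub_nonneg.2 hs1))]

lemma normalizedDiff_one_prod_le_sum (t : Multiset ℝ) (ht : ∀ r ∈ t, r ∈ Set.Icc 0 1) :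
    normalizedDiff 1 t.prod ≤ (t.map (normalizedDiff 1)).sum := by
  induction t using Multiset.induction with
  | empty => simp [normalizedDiff]
  | cons r t ih =>
    obtain ⟨hr, ht⟩ := Multiset.forall_mem_cons.1 ht
    have hprod : t.prod ∈ Set.Icc (0 : ℝ) 1 :=
      Multiset.prod_induction (· ∈ Set.Icc (0 : ℝ) 1) t (fun _ _ ↦ unitInterval.mul_mem)
        unitInterval.one_mem ht
    rw [Multiset.prod_cons, Multiset.map_cons, Multiset.sum_cons]
    exact (normalizedDiff_one_mul_le hr hprod).trans (add_le_add_right (ih ht) _)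

end NormalizedDiff

section ComplexNumbers

variable {z w : ℂ}

lemma inv_one_add_norm_le_re_inv_one_sub (hw : ‖w‖ ≤ 1) (hw1 : w ≠ 1) :
    (1 + ‖w‖)⁻¹ ≤ ((1 - w)⁻¹).re := by
  have normSq_eq : Complex.normSq (1 - w) = 1 + ‖w‖ ^ 2 - 2 * w.re := by
    rw [← Complex.normSq_eq_norm_sq, Complex.normSq_apply, Complex.normSq_apply, Complex.sub_re,
      Complex.sub_im, Complex.one_re, Complex.one_im]
    ring
  have normSq_pos : 0 < Complex.normSq (1 - w) := Complex.normSq_pos.2 (sub_ne_zero.2 hw1.symm)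
  have neg_norm_le : -‖w‖ ≤ w.re := neg_le_of_abs_le (Complex.abs_re_le_norm w)
  rw [Complex.inv_re, inv_eq_one_div, div_le_div_iff₀ (by positivity) normSq_pos, normSq_eq,
    Complex.sub_re, Complex.one_re]
  nlinarith [mul_nonneg (neg_le_iff_add_nonneg.1 neg_norm_le) (sub_nonneg.2 hw)]

lemma half_add_normalizedDiff_le_re_mul_inv_sub (hz : ‖z‖ = 1) (hw : ‖w‖ ≤ 1) (hzw : z ≠ w) :
    1 / 2 * (1 + normalizedDiff 1 ‖w‖) ≤ (z * (1 / (z - w))).re := by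
  have hz0 : z ≠ 0 := norm_ne_zero_iff.1 (by simp [hz])
  have norm_div_eq : ‖w / z‖ = ‖w‖ := by simp [hz]
  have quotient_eq : z * (1 / (z - w)) = (1 - w / z)⁻¹ := by
    field_simp
  have half_eq : 1 / 2 * (1 + normalizedDiff 1 ‖w‖) = (1 + ‖w‖)⁻¹ := by
    unfold normalizedDiff
    field_simp
    ring
  rw [half_eq, quotient_eq, ← norm_div_eq]
  exact inv_one_add_norm_le_re_inv_one_sub (norm_div_eq.trans_le hw)
    fun h ↦ hzw (eq_of_div_eq_one h).symm

lemma half_card_add_normalizedDiff_le_re_mul_sum (hz : ‖z‖ = 1) (s : Multiset ℂ)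
    (hs : ∀ w ∈ s, ‖w‖ ≤ 1 ∧ z ≠ w) :
    1 / 2 * (s.card + normalizedDiff 1 ‖s.prod‖) ≤ (z * (s.map fun w ↦ 1 / (z - w)).sum).re := by
  have norm_prod_eq : ‖s.prod‖ = (s.map norm).prod := map_multiset_prod (normHom (α := ℂ)) s
  have prod_le := normalizedDiff_one_prod_le_sum (s.map norm) <| by
    simpa using fun w hw ↦ (hs w hw).1
  calc 1 / 2 * (s.card + normalizedDiff 1 ‖s.prod‖)
      ≤ 1 / 2 * (s.card + (s.map fun w ↦ normalizedDiff 1 ‖w‖).sum) := by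
        rw [norm_prod_eq]
        simpa using prod_le
    _ = (s.map fun w ↦ 1 / 2 * (1 + normalizedDiff 1 ‖w‖)).sum := by
        simp [Multiset.sum_map_mul_left, Multiset.sum_map_add]
    _ ≤ (s.map fun w ↦ (z * (1 / (z - w))).re).sum :=
        Multiset.sum_map_le_sum_map _ _ fun w hw ↦
          half_add_normalizedDiff_le_re_mul_inv_sub hz (hs w hw).1 (hs w hw).2
    _ = (z * (s.map fun w ↦ 1 / (z - w)).sum).re := by
        rw [← Multiset.sum_map_mul_left, ← Complex.reCLM_apply, map_multiset_sum, Multiset.map_map]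
        rfl

lemma exists_norm_add_mul_eq_norm_sub {s : ℝ} (hs : 0 ≤ s) (h : s * ‖w‖ ≤ ‖z‖) :
    ∃ c : ℂ, ‖c‖ = s ∧ ‖z + c * w‖ = ‖z‖ - s * ‖w‖ := by
  obtain ⟨u, hu, hzu⟩ := Complex.exists_norm_mul_eq_self z
  obtain ⟨v, hv, hwv⟩ := Complex.exists_norm_eq_mul_self w
  refine ⟨-(s * u * v), by simp [hu, hv, abs_of_nonneg hs], ?_⟩
  have sum_eq : z + -(s * u * v) * w = u * (‖z‖ - s * ‖w‖ : ℝ) := by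
    push_cast
    linear_combination -hzu + s * u * hwv
  rw [sum_eq, norm_mul, hu, one_mul, Complex.norm_real, Real.norm_of_nonneg (sub_nonneg.2 h)]

lemma le_norm_of_forall_mem_frontier_le_norm {E : Type*} [NormedAddCommGroup E] [NormedSpace ℂ E]
    [Nontrivial E] {f : E → ℂ} {U : Set E} (hU : Bornology.IsBounded U) (hf : DiffContOnCl ℂ f U)
    (hf0 : ∀ x ∈ U, f x ≠ 0) {m : ℝ} (hm : ∀ x ∈ frontier U, m ≤ ‖f x‖) {x : E}
    (hx : x ∈ closure U) : m ≤ ‖f x‖ := by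
  rcases le_or_gt m 0 with hm0 | hm0
  · exact hm0.trans (norm_nonneg _)
  have ne_zero : ∀ y ∈ closure U, f y ≠ 0 := by
    intro y hy
    rw [closure_eq_self_union_frontier] at hy
    exact hy.elim (hf0 y) fun hy ↦ norm_pos_iff.1 (hm0.trans_le (hm y hy))
  have inv_le : ‖(f x)⁻¹‖ ≤ m⁻¹ :=
    Complex.norm_le_of_forall_mem_frontier_norm_le hU (hf.inv ne_zero)
      (fun y hy ↦ by simpa using inv_anti₀ hm0 (hm y hy)) hx
  rw [norm_inv] at inv_le
  exact (inv_le_inv₀ (norm_pos_iff.2 (ne_zero x hx)) hm0).1 inv_le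

end ComplexNumbers

lemma eval_reverse_mul_pow_natDegree {K : Type*} [Field K] (P : K[X]) {x : K} (hx : x ≠ 0) :
    P.reverse.eval x⁻¹ * x ^ P.natDegree = P.eval x := by
  let := invertibleOfNonzero hx
  simpa using eval₂_reverse_mul_pow (RingHom.id K) x P

section RootsInDisc

variable {P : ℂ[X]} {z w : ℂ} {m : ℝ}

lemma ne_zero_of_forall_isRoot_norm_le_one (hroots : ∀ w, P.IsRoot w → ‖w‖ ≤ 1) : P ≠ 0 := by
  rintro rfl
  have two_le : ‖(2 : ℂ)‖ ≤ 1 := hroots 2 (by simp)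
  norm_num at two_le

lemma normalizedDiff_norm_coeff_eq (hP : P ≠ 0) :
    normalizedDiff ‖P.leadingCoeff‖ ‖P.coeff 0‖ = normalizedDiff 1 ‖P.roots.prod‖ := by
  have norm_coeff_zero : ‖P.coeff 0‖ = ‖P.leadingCoeff‖ * ‖P.roots.prod‖ := by
    simp [(IsAlgClosed.splits P).coeff_zero_eq_leadingCoeff_mul_prod_roots]
  rw [norm_coeff_zero, normalizedDiff_mul_right (by simpa using hP)]

lemma half_natDegree_add_normalizedDiff_le_re_logDeriv
    (hroots : ∀ w, P.IsRoot w → ‖w‖ ≤ 1) (hz : ‖z‖ = 1) (hPz : P.eval z ≠ 0) :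
    1 / 2 * (P.natDegree + normalizedDiff ‖P.leadingCoeff‖ ‖P.coeff 0‖) ≤
      (z * (P.derivative.eval z / P.eval z)).re := by
  have hP : P ≠ 0 := ne_zero_of_forall_isRoot_norm_le_one hroots
  have hsplits : P.Splits := IsAlgClosed.splits P
  rw [normalizedDiff_norm_coeff_eq hP, hsplits.natDegree_eq_card_roots,
    hsplits.eval_derivative_div_eval_of_ne_zero hPz]
  refine half_card_add_normalizedDiff_le_re_mul_sum hz P.roots fun w hw ↦ ?_
  have hw : P.IsRoot w := isRoot_of_mem_roots hw
  exact ⟨hroots w hw, fun hzw ↦ hPz (hzw ▸ hw)⟩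

lemma half_natDegree_add_normalizedDiff_mul_norm_eval_le
    (hroots : ∀ w, P.IsRoot w → ‖w‖ ≤ 1) (hz : ‖z‖ = 1) :
    1 / 2 * (P.natDegree + normalizedDiff ‖P.leadingCoeff‖ ‖P.coeff 0‖) * ‖P.eval z‖ ≤
      ‖P.derivative.eval z‖ := by
  by_cases hPz : P.eval z = 0
  · simp [hPz]
  have le_norm := (half_natDegree_add_normalizedDiff_le_re_logDeriv hroots hz hPz).trans
    (Complex.re_le_norm _)
  rwa [norm_mul, hz, one_mul, norm_div, le_div_iff₀ (norm_pos_iff.2 hPz)] at le_norm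

lemma eval_derivative_ne_zero_of_forall_isRoot_norm_le_one (hdeg : P.natDegree ≠ 0)
    (hroots : ∀ w, P.IsRoot w → ‖w‖ ≤ 1) (hz : ‖z‖ = 1) (hPz : P.eval z ≠ 0) :
    P.derivative.eval z ≠ 0 := by
  have hP : P ≠ 0 := ne_zero_of_forall_isRoot_norm_le_one hroots
  have lead_pos : 0 < ‖P.leadingCoeff‖ := by simpa using hP
  have one_le_degree : (1 : ℝ) ≤ P.natDegree := by exact_mod_cast Nat.one_le_iff_ne_zero.2 hdeg
  have neg_one_lt : -1 < normalizedDiff ‖P.leadingCoeff‖ ‖P.coeff 0‖ := by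
    unfold normalizedDiff
    rw [lt_div_iff₀ (by positivity)]
    linarith
  have re_pos : 0 < (z * (P.derivative.eval z / P.eval z)).re :=
    (half_natDegree_add_normalizedDiff_le_re_logDeriv hroots hz hPz).trans_lt' (by linarith)
  intro hP'z
  simp [hP'z] at re_pos

lemma le_norm_eval_reverse (hroots : ∀ w, P.IsRoot w → ‖w‖ ≤ 1)
    (hm : ∀ z : ℂ, ‖z‖ = 1 → m ≤ ‖P.eval z‖) (hw : ‖w‖ ≤ 1) :
    m ≤ ‖P.reverse.eval w‖ := by
  have eval_reverse {x : ℂ} (hx : x ≠ 0) : P.reverse.eval x = P.eval x⁻¹ * x ^ P.natDegree := by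
    rw [← eval_reverse_mul_pow_natDegree P (inv_ne_zero hx), inv_inv, mul_assoc, ← mul_pow,
      inv_mul_cancel₀ hx, one_pow, mul_one]
  refine le_norm_of_forall_mem_frontier_le_norm (U := ball 0 1) isBounded_ball
    P.reverse.differentiable.diffContOnCl (fun x hx ↦ ?_) (fun x hx ↦ ?_)
    (by simpa [closure_ball] using hw)
  · rcases eq_or_ne x 0 with rfl | hx0
    · rw [← coeff_zero_eq_eval_zero, coeff_zero_reverse]
      exact leadingCoeff_ne_zero.2 (ne_zero_of_forall_isRoot_norm_le_one hroots)
    · have one_lt_norm_inv : 1 < ‖x⁻¹‖ := by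
        rw [norm_inv]
        exact (one_lt_inv₀ (norm_pos_iff.2 hx0)).2 (by simpa using hx)
      rw [eval_reverse hx0]
      exact mul_ne_zero (fun h ↦ (hroots _ h).not_gt one_lt_norm_inv) (pow_ne_zero _ hx0)
  · have norm_eq : ‖x‖ = 1 := by simpa [frontier_ball] using hx
    have hx0 : x ≠ 0 := norm_ne_zero_iff.1 (by simp [norm_eq])
    simpa [eval_reverse hx0, norm_eq] using hm x⁻¹ (by simp [norm_eq])

lemma mul_norm_pow_natDegree_le_norm_eval (hroots : ∀ w, P.IsRoot w → ‖w‖ ≤ 1)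
    (hm : ∀ z : ℂ, ‖z‖ = 1 → m ≤ ‖P.eval z‖) (hw : 1 ≤ ‖w‖) :
    m * ‖w‖ ^ P.natDegree ≤ ‖P.eval w‖ := by
  have hw0 : w ≠ 0 := norm_pos_iff.1 (one_pos.trans_le hw)
  have le_reverse : m ≤ ‖P.reverse.eval w⁻¹‖ :=
    le_norm_eval_reverse hroots hm (by simpa using inv_le_one_of_one_le₀ hw)
  rw [← eval_reverse_mul_pow_natDegree P hw0, norm_mul, norm_pow]
  gcongr

lemma le_norm_leadingCoeff (hroots : ∀ w, P.IsRoot w → ‖w‖ ≤ 1)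
    (hm : ∀ z : ℂ, ‖z‖ = 1 → m ≤ ‖P.eval z‖) : m ≤ ‖P.leadingCoeff‖ := by
  rw [← coeff_zero_reverse, coeff_zero_eq_eval_zero]
  exact le_norm_eval_reverse hroots hm (by simp)

end RootsInDisc

section Perturbation

variable {P : ℂ[X]} {z c : ℂ} {m : ℝ}

lemma isRoot_add_C_mul_X_pow_norm_le_one (hroots : ∀ w, P.IsRoot w → ‖w‖ ≤ 1)
    (hm : ∀ z : ℂ, ‖z‖ = 1 → m ≤ ‖P.eval z‖) (hc : ‖c‖ < m) {w : ℂ}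
    (hw : (P + C c * X ^ P.natDegree).IsRoot w) : ‖w‖ ≤ 1 := by
  by_contra! one_lt
  have eval_eq : P.eval w = -(c * w ^ P.natDegree) :=
    eq_neg_of_add_eq_zero_left (by simpa using hw)
  have growth : m * ‖w‖ ^ P.natDegree ≤ ‖c‖ * ‖w‖ ^ P.natDegree := by
    simpa [eval_eq] using mul_norm_pow_natDegree_le_norm_eval hroots hm one_lt.le
  exact hc.not_ge (le_of_mul_le_mul_right growth (by positivity))

lemma natDegree_add_C_mul_X_pow (hc : ‖c‖ < ‖P.leadingCoeff‖) :
    (P + C c * X ^ P.natDegree).natDegree = P.natDegree := by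
  refine natDegree_eq_of_le_of_coeff_ne_zero
    (natDegree_add_le_of_degree_le le_rfl (natDegree_C_mul_X_pow_le c _)) ?_
  intro h
  have lead_add_eq_zero : P.leadingCoeff + c = 0 := by simpa using h
  exact hc.ne' (by rw [eq_neg_of_add_eq_zero_left lead_add_eq_zero, norm_neg])

lemma leadingCoeff_add_C_mul_X_pow (hc : ‖c‖ < ‖P.leadingCoeff‖) :
    (P + C c * X ^ P.natDegree).leadingCoeff = P.leadingCoeff + c := by
  rw [leadingCoeff, natDegree_add_C_mul_X_pow hc]
  simp

lemma eval_derivative_add_C_mul_X_pow :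
    (P + C c * X ^ P.natDegree).derivative.eval z =
      P.derivative.eval z + c * (P.natDegree * z ^ (P.natDegree - 1)) := by
  simp [derivative_X_pow]

lemma norm_eval_sub_norm_le_norm_eval_add_C_mul_X_pow (hz : ‖z‖ = 1) :
    ‖P.eval z‖ - ‖c‖ ≤ ‖(P + C c * X ^ P.natDegree).eval z‖ := by
  simpa [hz] using norm_sub_le_norm_add (P.eval z) (c * z ^ P.natDegree)

lemma half_natDegree_add_normalizedDiff_mul_norm_eval_sub_le (hdeg : P.natDegree ≠ 0)
    (hroots : ∀ w, P.IsRoot w → ‖w‖ ≤ 1) (hm : ∀ z : ℂ, ‖z‖ = 1 → m ≤ ‖P.eval z‖)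
    (hc : ‖c‖ < m) (hz : ‖z‖ = 1) :
    1 / 2 * (P.natDegree + normalizedDiff (‖P.leadingCoeff‖ - m) ‖P.coeff 0‖) *
        (‖P.eval z‖ - ‖c‖) ≤
      ‖P.derivative.eval z + c * (P.natDegree * z ^ (P.natDegree - 1))‖ := by
  set F := P + C c * X ^ P.natDegree with hF
  have m_le_lead : m ≤ ‖P.leadingCoeff‖ := le_norm_leadingCoeff hroots hm
  have natDegree_F : F.natDegree = P.natDegree := natDegree_add_C_mul_X_pow (hc.trans_le m_le_lead)
  have coeff_zero_F : F.coeff 0 = P.coeff 0 := by simp [hF, coeff_X_pow, hdeg.symm]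
  have lead_F : ‖P.leadingCoeff‖ - m ≤ ‖F.leadingCoeff‖ := by
    rw [hF, leadingCoeff_add_C_mul_X_pow (hc.trans_le m_le_lead)]
    linarith [norm_sub_le_norm_add P.leadingCoeff c]
  have diff_le : normalizedDiff (‖P.leadingCoeff‖ - m) ‖P.coeff 0‖ ≤
      normalizedDiff ‖F.leadingCoeff‖ ‖F.coeff 0‖ := by
    rw [coeff_zero_F]
    exact normalizedDiff_le_normalizedDiff_left (sub_nonneg.2 m_le_lead) lead_F (norm_nonneg _)
  have eval_sub_nonneg : 0 ≤ ‖P.eval z‖ - ‖c‖ := sub_nonneg.2 (hc.le.trans (hm z hz))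
  have dubinin := half_natDegree_add_normalizedDiff_mul_norm_eval_le
    (fun w ↦ isRoot_add_C_mul_X_pow_norm_le_one hroots hm hc) hz
  rw [← hF, natDegree_F, hF, eval_derivative_add_C_mul_X_pow, ← hF] at dubinin
  have neg_one_le : -1 ≤ normalizedDiff ‖F.leadingCoeff‖ ‖F.coeff 0‖ :=
    neg_one_le_normalizedDiff (norm_nonneg _) (norm_nonneg _)
  have one_le_degree : (1 : ℝ) ≤ P.natDegree := by exact_mod_cast Nat.one_le_iff_ne_zero.2 hdeg
  refine le_trans (mul_le_mul ?_ (norm_eval_sub_norm_le_norm_eval_add_C_mul_X_pow hz)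
    eval_sub_nonneg ?_) dubinin <;> linarith

lemma natDegree_mul_le_norm_eval_derivative (hdeg : P.natDegree ≠ 0)
    (hroots : ∀ w, P.IsRoot w → ‖w‖ ≤ 1) (hm : ∀ z : ℂ, ‖z‖ = 1 → m ≤ ‖P.eval z‖)
    (hz : ‖z‖ = 1) : P.natDegree * m ≤ ‖P.derivative.eval z‖ := by
  by_contra! norm_lt
  have degree_pos : (0 : ℝ) < P.natDegree := by exact_mod_cast Nat.pos_of_ne_zero hdeg
  have hz0 : z ≠ 0 := norm_ne_zero_iff.1 (by simp [hz])
  set c := -P.derivative.eval z / (P.natDegree * z ^ (P.natDegree - 1)) with hc_def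
  have hc : ‖c‖ < m := by
    simpa [hc_def, hz, div_lt_iff₀' degree_pos] using norm_lt
  have natDegree_eq := natDegree_add_C_mul_X_pow (hc.trans_le (le_norm_leadingCoeff hroots hm))
  have norm_eval_pos := (sub_pos.2 (hc.trans_le (hm z hz))).trans_le
    (norm_eval_sub_norm_le_norm_eval_add_C_mul_X_pow hz)
  refine eval_derivative_ne_zero_of_forall_isRoot_norm_le_one (natDegree_eq.trans_ne hdeg)
    (fun w ↦ isRoot_add_C_mul_X_pow_norm_le_one hroots hm hc) hz (norm_pos_iff.1 norm_eval_pos) ?_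
  rw [eval_derivative_add_C_mul_X_pow, hc_def, div_mul_cancel₀ _ (by simp [hz0, hdeg]),
    add_neg_cancel]

lemma natDegree_div_two_mul_add_le_norm_eval_derivative (hdeg : P.natDegree ≠ 0)
    (hroots : ∀ w, P.IsRoot w → ‖w‖ ≤ 1) (hm0 : 0 ≤ m)
    (hm : ∀ z : ℂ, ‖z‖ = 1 → m ≤ ‖P.eval z‖) (hz : ‖z‖ = 1) :
    (P.natDegree : ℝ) / 2 * (‖P.eval z‖ + m) +
        1 / 2 * normalizedDiff (‖P.leadingCoeff‖ - m) ‖P.coeff 0‖ * (‖P.eval z‖ - m) ≤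
      ‖P.derivative.eval z‖ := by
  rcases hm0.eq_or_lt with rfl | hm_pos
  · have dubinin := half_natDegree_add_normalizedDiff_mul_norm_eval_le hroots hz
    rw [sub_zero, sub_zero, add_zero]
    linarith
  set A := normalizedDiff (‖P.leadingCoeff‖ - m) ‖P.coeff 0‖
  have bound_of_lt : ∀ s ∈ Set.Ico 0 m,
      1 / 2 * (P.natDegree + A) * (‖P.eval z‖ - s) + P.natDegree * s ≤
        ‖P.derivative.eval z‖ := by
    rintro s ⟨hs0, hsm⟩
    set u := P.natDegree * z ^ (P.natDegree - 1)
    have norm_u : ‖u‖ = P.natDegree := by simp [u, hz]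
    have mul_norm_u_le : s * ‖u‖ ≤ ‖P.derivative.eval z‖ := by
      rw [norm_u, mul_comm]
      exact natDegree_mul_le_norm_eval_derivative hdeg hroots (fun w hw ↦ hsm.le.trans (hm w hw)) hz
    obtain ⟨c, rfl, norm_sum⟩ := exists_norm_add_mul_eq_norm_sub hs0 mul_norm_u_le
    have perturbed :=
      half_natDegree_add_normalizedDiff_mul_norm_eval_sub_le hdeg hroots hm hsm hz
    rw [norm_sum, norm_u] at perturbed
    linarith
  have m_mem_closure : m ∈ closure (Set.Ico 0 m) := by
    rw [closure_Ico hm_pos.ne]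
    exact Set.right_mem_Icc.2 hm0
  have bound_at_m := le_on_closure bound_of_lt (by fun_prop) (by fun_prop) m_mem_closure
  linarith

end Perturbation

section MaxMod

variable (P : ℂ[X]) {z : ℂ} {r : ℝ}

lemma exists_norm_eval_eq_maxMod (hr : 0 ≤ r) : ∃ z : ℂ, ‖z‖ = r ∧ ‖P.eval z‖ = maxMod P r := by
  have : Nonempty (sphere (0 : ℂ) r) := (NormedSpace.sphere_nonempty.2 hr).to_subtype
  obtain ⟨⟨z, hz⟩, hmax⟩ : maxMod P r ∈ Set.range fun z : sphere (0 : ℂ) r ↦ ‖P.eval (z : ℂ)‖ :=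
    (isCompact_range (by fun_prop)).sSup_mem (Set.range_nonempty _)
  exact ⟨z, by simpa using hz, hmax⟩

lemma norm_eval_le_maxMod (hz : ‖z‖ = r) : ‖P.eval z‖ ≤ maxMod P r :=
  le_ciSup (f := fun z : sphere (0 : ℂ) r ↦ ‖P.eval (z : ℂ)‖)
    (isCompact_range (by fun_prop)).bddAbove ⟨z, by simpa using hz⟩

lemma minMod_nonneg : 0 ≤ minMod P r :=
  Real.iInf_nonneg fun _ ↦ norm_nonneg _

lemma minMod_le_norm_eval (hz : ‖z‖ = r) : minMod P r ≤ ‖P.eval z‖ :=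
  ciInf_le (f := fun z : sphere (0 : ℂ) r ↦ ‖P.eval (z : ℂ)‖)
    (isCompact_range (by fun_prop)).bddBelow ⟨z, by simpa using hz⟩

end MaxMod

-- For `l = 1` the quotient is `0 / 0` when `P = a zⁿ`, but its cofactor then vanishes as well.
theorem stmt_4_general {P : ℂ[X]} (hdeg : P.natDegree ≠ 0) (hroots : ∀ w, P.IsRoot w → ‖w‖ ≤ 1)
    {l : ℝ} (hl0 : 0 ≤ l) (hl1 : l ≤ 1) :
    (P.natDegree : ℝ) / 2 * (maxMod P 1 + l * minMod P 1) +
        1 / 2 * normalizedDiff (‖P.leadingCoeff‖ - l * minMod P 1) ‖P.coeff 0‖ *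
          (maxMod P 1 - l * minMod P 1) ≤
      maxMod P.derivative 1 := by
  obtain ⟨z, hz, hmax⟩ := exists_norm_eval_eq_maxMod P zero_le_one
  have hm : ∀ w : ℂ, ‖w‖ = 1 → l * minMod P 1 ≤ ‖P.eval w‖ := fun w hw ↦
    (mul_le_of_le_one_left (minMod_nonneg P) hl1).trans (minMod_le_norm_eval P hw)
  rw [← hmax]
  exact (natDegree_div_two_mul_add_le_norm_eval_derivative hdeg hroots
    (mul_nonneg hl0 (minMod_nonneg P)) hm hz).trans (norm_eval_le_maxMod _ hz)

theorem stmt_4 (n : ℕ) (hn : 2 ≤ n) (P : Polynomial ℂ) (hdeg : P.natDegree = n)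
    (hroots : ∀ w : ℂ, P.IsRoot w → ‖w‖ ≤ 1)
    (m₁ : ℝ) (hm₁ : m₁ = minMod P 1) (l : ℝ) (hl0 : 0 ≤ l) (hl1 : l < 1) :
    maxMod (Polynomial.derivative P) 1 ≥
      ((n : ℝ) / 2) * (maxMod P 1 + l * m₁) +
        (1 / 2) *
          ((‖P.coeff n‖ - l * m₁ - ‖P.coeff 0‖) /
              (‖P.coeff n‖ - l * m₁ + ‖P.coeff 0‖)) *
          (maxMod P 1 - l * m₁) := by
  subst hdeg hm₁
  exact stmt_4_general (by lia) hroots hl0 hl1.le
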